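/- arXiv:1504.00726 — 3 statements merged into one kernel-verified Lean document; each statement's English description precedes it below -/
import Mathlib

section
/- Let ω : Π → ℝⁿ be C¹ with rank(∂_ξ ω) = n−1 and rank(∂_ξ ωᵀ, ωᵀ) = n for all ξ ∈ Π. Then for every ξ ∈ Π there exist indices i, j with 1 ≤ i, j ≤ n such that the map ω̃ = (ω₁,…,ω_{j−1},ω_{j+1},…,ωₙ), viewed as a function of ξ̃ = (ξ₁,…,ξ_{i−1},ξ_{i+1},…,ξₙ), satisfies rank(∂_{ξ̃} ω̃) = n−1. Moreover, if additionally ω_j(ξ) ≠ 0, then rank(∂_{ξ̃} (ω̃/ω_j)) = n−1. -/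
/-!
Fix `ξ` and write `A` for the Jacobian of `ω` at `ξ` and `w = ω ξ`. Since `A` has corank one, its
kernel is a line, spanned by some `v`, and there is a nonzero `u` with `uᵀ A = 0`. Choose `i` with
`v i ≠ 0` and `j` with `u j ≠ 0`.

For `y` indexed by the remaining variables, let `y'` be its extension by zero at `i`; if `A y' = 0`
then `y'` is a multiple of `v` vanishing at `i`, so `y = 0`. If the minor obtained by deleting
row `j` and column `i` kills `y`, then `A y'` vanishes off `j`, and `uᵀ A y' = 0` makes it vanish
at `j` too, so `y = 0`. Thus the minor is invertible. If the Jacobian of `ω̃ / ω_j` kills `y`, the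
quotient rule gives `A y' = c w` with `c = (A y') j / w j`; the second rank condition says that `w`
is not in the range of `A`, so `c = 0` and again `y = 0`.
-/

open Matrix in
/-- A square matrix of corank one has a coordinate that detects the vectors of its kernel. -/
lemma exists_coord_of_rank {n : ℕ} (A : Matrix (Fin (n + 1)) (Fin (n + 1)) ℝ) (hA : A.rank = n) :
    ∃ i, ∀ y, A *ᵥ y = 0 → y i = 0 → y = 0 := by
  have h := LinearMap.finrank_range_add_finrank_ker A.mulVecLin
  rw [Module.finrank_fin_fun] at h
  have h1 : Module.finrank ℝ (LinearMap.ker A.mulVecLin) = 1 := by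
    unfold Matrix.rank at hA
    omega
  obtain ⟨v, hv0, hv⟩ := finrank_eq_one_iff'.1 h1
  have hv0' : (v : Fin (n + 1) → ℝ) ≠ 0 := fun h => hv0 (Subtype.ext h)
  obtain ⟨i, hi⟩ := Function.ne_iff.1 hv0'
  refine ⟨i, fun y hy hyi => ?_⟩
  obtain ⟨c, hc⟩ := hv ⟨y, by simpa using hy⟩
  have hc' : c • (v : Fin (n + 1) → ℝ) = y := congrArg Subtype.val hc
  have hci : c * (v : Fin (n + 1) → ℝ) i = 0 := by
    rw [← hyi, ← hc']; simp
  have : c = 0 := (mul_eq_zero.1 hci).resolve_right hi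
  rw [← hc', this, zero_smul]

open Matrix in
lemma exists_left_kernel_of_rank {n : ℕ} (A : Matrix (Fin (n + 1)) (Fin (n + 1)) ℝ)
    (hA : A.rank = n) : ∃ (u : Fin (n + 1) → ℝ) (j : Fin (n + 1)), u j ≠ 0 ∧ u ᵥ* A = 0 := by
  have hdet : A.det = 0 := by
    by_contra h
    have := Matrix.rank_of_isUnit A ((Matrix.isUnit_iff_isUnit_det A).2 (isUnit_iff_ne_zero.2 h))
    simp [hA] at this
  obtain ⟨u, hu0, hu⟩ := Matrix.exists_vecMul_eq_zero_iff.2 hdet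
  obtain ⟨j, hj⟩ := Function.ne_iff.1 hu0
  exact ⟨u, j, hj, hu⟩

open Matrix in
/-- If appending the column `w` to `A` raises the rank, then `w` is not in the range of `A`. -/
lemma not_mem_range_of_rank_snoc {n : ℕ} (A : Matrix (Fin (n + 1)) (Fin (n + 1)) ℝ)
    (w : Fin (n + 1) → ℝ) (hA : A.rank = n)
    (hB : (Matrix.of fun (i : Fin (n + 1)) (j : Fin (n + 2)) =>
        (Fin.snoc (α := fun _ => ℝ) (fun j' : Fin (n + 1) => A i j') (w i) j)).rank = n + 1)
    (z : Fin (n + 1) → ℝ) : A *ᵥ z ≠ w := by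
  intro hz
  have hle : LinearMap.range (Matrix.of fun (i : Fin (n + 1)) (j : Fin (n + 2)) =>
      (Fin.snoc (α := fun _ => ℝ) (fun j' : Fin (n + 1) => A i j') (w i) j)).mulVecLin ≤
      LinearMap.range A.mulVecLin := by
    rintro _ ⟨x, rfl⟩
    refine ⟨(fun k => x k.castSucc) + x (Fin.last _) • z, ?_⟩
    rw [Matrix.mulVecLin_apply, Matrix.mulVec_add, Matrix.mulVec_smul, hz]
    ext k
    simp [Matrix.mulVec, dotProduct, Fin.sum_univ_castSucc (n := n + 1), mul_comm]
  have := Submodule.finrank_mono hle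
  unfold Matrix.rank at hA hB
  omega

open Matrix in
lemma rank_eq_of_mulVec_eq_zero {n : ℕ} (M : Matrix (Fin n) (Fin n) ℝ)
    (h : ∀ y, M *ᵥ y = 0 → y = 0) : M.rank = n := by
  have hinj : Function.Injective M.mulVec :=
    (injective_iff_map_eq_zero M.mulVecLin).2 h
  simpa using Matrix.rank_of_isUnit M (Matrix.mulVec_injective_iff_isUnit.1 hinj)

open Matrix in
/-- Extending a vector by zero at `i` corresponds to deleting the `i`-th column. -/
lemma mulVec_insertNth_zero {n : ℕ} (A : Matrix (Fin (n + 1)) (Fin (n + 1)) ℝ)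
    (i k : Fin (n + 1)) (y : Fin n → ℝ) :
    (A *ᵥ (i.insertNth 0 y : Fin (n + 1) → ℝ)) k = ∑ l, A k (i.succAbove l) * y l := by
  simp [Matrix.mulVec, dotProduct, Fin.sum_univ_succAbove _ i]

open Matrix in
/-- The linear algebra at a single point: the conclusion of the theorem for a matrix `A` of corank
one and a vector `w` outside its range, with the Jacobian of the quotient written out. -/
lemma exists_minor_rank {n : ℕ} (A : Matrix (Fin (n + 1)) (Fin (n + 1)) ℝ)
    (w : Fin (n + 1) → ℝ) (hA : A.rank = n) (hw : ∀ z, A *ᵥ z ≠ w) :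
    ∃ i j : Fin (n + 1), (A.submatrix j.succAbove i.succAbove).rank = n ∧
      (w j ≠ 0 → (Matrix.of fun (k l : Fin n) =>
        (A (j.succAbove k) (i.succAbove l) * w j - w (j.succAbove k) * A j (i.succAbove l)) /
          w j ^ 2).rank = n) := by
  obtain ⟨i, hi⟩ := exists_coord_of_rank A hA
  obtain ⟨u, j, huj, hu⟩ := exists_left_kernel_of_rank A hA
  have hker : ∀ y : Fin n → ℝ, A *ᵥ (i.insertNth 0 y : Fin (n + 1) → ℝ) = 0 → y = 0 := by
    intro y hy
    have h0 := hi _ hy (by simp)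
    ext l
    simpa using congrFun h0 (i.succAbove l)
  refine ⟨i, j, rank_eq_of_mulVec_eq_zero _ fun y hy => hker y ?_, fun hwj =>
    rank_eq_of_mulVec_eq_zero _ fun y hy => hker y ?_⟩
  · have hk : ∀ k, (A *ᵥ (i.insertNth 0 y : Fin (n + 1) → ℝ)) (j.succAbove k) = 0 := by
      intro k
      rw [mulVec_insertNth_zero]
      exact congrFun hy k
    have hdot : u ⬝ᵥ (A *ᵥ (i.insertNth 0 y : Fin (n + 1) → ℝ)) = 0 := by
      rw [Matrix.dotProduct_mulVec, hu, zero_dotProduct]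
    rw [dotProduct, Fin.sum_univ_succAbove _ j] at hdot
    simp only [hk, mul_zero, Finset.sum_const_zero, add_zero] at hdot
    ext k
    rcases Fin.eq_self_or_eq_succAbove j k with rfl | ⟨k, rfl⟩
    · exact (mul_eq_zero.1 hdot).resolve_left huj
    · exact hk k
  · set y' : Fin (n + 1) → ℝ := i.insertNth 0 y with hy'
    have hk : ∀ k, (A *ᵥ y') (j.succAbove k) * w j = w (j.succAbove k) * (A *ᵥ y') j := by
      intro k
      have h := congrFun hy k
      simp only [Matrix.mulVec, dotProduct, Matrix.of_apply, Pi.zero_apply] at h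
      rw [hy', mulVec_insertNth_zero, mulVec_insertNth_zero, Finset.sum_mul, Finset.mul_sum,
        ← sub_eq_zero, ← Finset.sum_sub_distrib]
      have h2 := congrArg (· * w j ^ 2) h
      simp only [zero_mul, Finset.sum_mul] at h2
      rw [← h2]
      refine Finset.sum_congr rfl fun l _ => ?_
      field_simp
    have hc : A *ᵥ y' = ((A *ᵥ y') j / w j) • w := by
      ext k
      rw [Pi.smul_apply, smul_eq_mul]
      rcases Fin.eq_self_or_eq_succAbove j k with rfl | ⟨k, rfl⟩
      · field_simp
      · have := hk k
        field_simp
        linarith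
    by_cases h0 : (A *ᵥ y') j / w j = 0
    · rw [hc, h0, zero_smul]
    · refine absurd ?_ (hw (((A *ᵥ y') j / w j)⁻¹ • y'))
      rw [Matrix.mulVec_smul]
      nth_rewrite 2 [hc]
      rw [smul_smul, inv_mul_cancel₀ h0, one_smul]

lemma fderiv_div_coord {n : ℕ} (ω : (Fin n → ℝ) → Fin n → ℝ) (ξ : Fin n → ℝ)
    (hω : DifferentiableAt ℝ ω ξ) (a b : Fin n) (hb : ω ξ b ≠ 0) (v : Fin n → ℝ) :
    fderiv ℝ (fun x => ω x a / ω x b) ξ v =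
      (fderiv ℝ ω ξ v a * ω ξ b - ω ξ a * fderiv ℝ ω ξ v b) / ω ξ b ^ 2 := by
  have h := hasFDerivAt_pi'.1 hω.hasFDerivAt
  have hinv := (hasDerivAt_inv hb).comp_hasFDerivAt ξ (h b)
  have hdiv : HasFDerivAt (fun x => ω x a / ω x b) _ ξ := (h a).mul hinv
  rw [hdiv.fderiv]
  simp
  field_simp
  ring


/-- stated in dimension n+1, so "n−1" becomes n: Let ω : ℝ^{n+1} → ℝ^{n+1}
be C¹ with rank(∂ξω) = n and rank(∂ξωᵀ, ωᵀ) = n+1 on Dom. Then for every ξ ∈ Dom there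
are indices i, j such that the Jacobian of ω with the j-th component and the i-th variable
deleted has rank n; moreover if ω_j(ξ) ≠ 0 then the Jacobian of ω̃/ω_j (in the remaining
variables) also has rank n. -/
theorem stmt2 (n : ℕ) (Dom : Set (Fin (n + 1) → ℝ))
    (ω : (Fin (n + 1) → ℝ) → Fin (n + 1) → ℝ) (hω : ContDiff ℝ 1 ω)
    (hrank1 : ∀ ξ ∈ Dom,
      (Matrix.of fun (i j : Fin (n + 1)) => fderiv ℝ ω ξ (Pi.single j 1) i).rank = n)
    (hrank2 : ∀ ξ ∈ Dom,
      (Matrix.of fun (i : Fin (n + 1)) (j : Fin (n + 2)) =>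
        Fin.snoc (fun j' : Fin (n + 1) => fderiv ℝ ω ξ (Pi.single j' 1) i)
          (ω ξ i) j).rank = n + 1) :
    ∀ ξ ∈ Dom, ∃ i j : Fin (n + 1),
      ((Matrix.of fun (i' j' : Fin (n + 1)) =>
          fderiv ℝ ω ξ (Pi.single j' 1) i').submatrix j.succAbove i.succAbove).rank = n ∧
      (ω ξ j ≠ 0 →
        (Matrix.of fun (i' j' : Fin n) =>
          fderiv ℝ (fun x => ω x (j.succAbove i') / ω x j) ξ
            (Pi.single (i.succAbove j') 1)).rank = n) := by
  intro ξ hξ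
  obtain ⟨i, j, hM, hQ⟩ := exists_minor_rank _ (ω ξ) (hrank1 ξ hξ)
    (not_mem_range_of_rank_snoc _ _ (hrank1 ξ hξ) (hrank2 ξ hξ))
  refine ⟨i, j, hM, fun hj => ?_⟩
  have hd : DifferentiableAt ℝ ω ξ := hω.differentiable one_ne_zero ξ
  simp only [fderiv_div_coord ω ξ hd _ j hj]
  exact hQ hj
end

section
/- Let ω₀ = (ω₀₁, ω₀₂) ∈ ℝ² satisfy |k₁ω₀₁ + k₂ω₀₂| ≥ α/|k|^τ for all k ∈ ℤ²∖{0}, where 0 < α < 1 and τ > 1. For λ ∈ ℝ set f_k(λ) = k₁(ω₀₁ + λ) + k₂ω₀₂, and define Π_{λ₀} = {λ ∈ [0, λ₀] : |f_k(λ)| ≥ α/(2|k|^{2τ+2}) for all k ∈ ℤ²∖{0}}. Then for sufficiently small λ₀ > 0, Π_{λ₀} is non-empty and meas([0,λ₀] ∖ Π_{λ₀}) = o(λ₀) as λ₀ → 0; more precisely meas([0,λ₀] ∖ Π_{λ₀}) ≤ c λ₀ (λ₀/α)^{(τ−1)/(τ+1)}. -/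
/-!
Write `f_k(l) = k₁ (ω₀₁ + l) + k₂ ω₀₂`. If `l ∈ [0, lam₀]` violates the condition at `k`, then
comparing `f_k(l)` with `f_k(0)`, whose absolute value is at least `α / |k|^τ`, gives
`|k|^(τ+1) ≥ α / (2 lam₀)` and `k₁ ≠ 0`: only large `k` are resonant, namely
`|k| ≥ K := (α / (2 lam₀))^(1/(τ+1))`. As `l ↦ f_k(l)` has slope `k₁`, the resonant set of such a
`k` has measure at most `α / |k|^(2τ+2)` (`volume_resonant_le`).

The sum of these measures over `|k| ≥ K` has order `α K^(-2τ)`. Instead of counting lattice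
points on spheres, the summand is dominated by a product `tailWeight |k₁| * tailWeight |k₂|` whose
factors have telescoping sums, at most a constant times `K^(-τ)` (`tsum_int_tailWeight_le`). Since
`2τ/(τ+1) = 1 + (τ-1)/(τ+1)`, this is the claimed bound with `c = 1024`; once its right-hand
side is below `lam₀`, the good set cannot be empty.
-/

open MeasureTheory

/-- A telescoping majorant of `N ^ (-(τ+1))`, valid for `N ≥ max K m`; it has order
`K ^ (1-τ) / (K + m) ^ 2`. -/
noncomputable def tailWeight (τ K : ℝ) (m : ℕ) : ℝ :=
  8 * K ^ (1 - τ) * (1 / (K + m) - 1 / (K + (m + 1 : ℕ)))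

lemma tailWeight_nonneg (τ : ℝ) {K : ℝ} (hK : 1 ≤ K) (m : ℕ) : 0 ≤ tailWeight τ K m := by
  have hm : (0 : ℝ) ≤ m := m.cast_nonneg
  have : 1 / (K + (m + 1 : ℕ)) ≤ 1 / (K + m) := by
    apply one_div_le_one_div_of_le <;> push_cast <;> linarith
  have h2 : 0 ≤ K ^ (1 - τ) := by positivity
  unfold tailWeight
  have := sub_nonneg.2 this
  positivity

lemma inv_rpow_le_tailWeight {τ K N : ℝ} (hτ : 1 < τ) (hK : 1 ≤ K) (hKN : K ≤ N) (m : ℕ)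
    (hmN : (m : ℝ) ≤ N) : (N ^ (τ + 1))⁻¹ ≤ tailWeight τ K m := by
  have hm : (0 : ℝ) ≤ m := m.cast_nonneg
  have hK0 : 0 < K := by linarith
  have hN : 0 < N := by linarith
  have e1 : N ^ (τ + 1) = N ^ (τ - 1) * N ^ 2 := by
    rw [← Real.rpow_natCast N 2, ← Real.rpow_add hN]; congr 1; push_cast; ring
  have e2 : K ^ (1 - τ) = (K ^ (τ - 1))⁻¹ := by
    rw [← Real.rpow_neg hK0.le]; congr 1; ring
  have h1 : K ^ (τ - 1) ≤ N ^ (τ - 1) := Real.rpow_le_rpow hK0.le hKN (by linarith)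
  have e3 : 1 / (K + m) - 1 / (K + (m + 1 : ℕ)) = ((K + m) * (K + m + 1))⁻¹ := by
    push_cast
    have : K + m ≠ 0 := by positivity
    have : K + m + 1 ≠ 0 := by positivity
    have : K + (m + 1) ≠ 0 := by positivity
    field_simp
    ring
  have h2 : (N ^ 2)⁻¹ ≤ 8 * ((K + m) * (K + m + 1))⁻¹ := by
    rw [← div_eq_mul_inv, inv_eq_one_div, div_le_div_iff₀ (by positivity) (by positivity)]
    nlinarith
  unfold tailWeight
  rw [e1, e2, e3, mul_inv]
  calc (N ^ (τ - 1))⁻¹ * (N ^ 2)⁻¹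
      ≤ (K ^ (τ - 1))⁻¹ * (8 * ((K + m) * (K + m + 1))⁻¹) := by gcongr
    _ = _ := by ring

lemma tsum_tailWeight_le (τ : ℝ) {K : ℝ} (hK : 1 ≤ K) :
    ∑' m : ℕ, ENNReal.ofReal (tailWeight τ K m) ≤ ENNReal.ofReal (8 * K ^ (-τ)) := by
  have hK0 : 0 < K := by linarith
  rw [ENNReal.tsum_eq_iSup_nat]
  refine iSup_le fun n => ?_
  rw [← ENNReal.ofReal_sum_of_nonneg fun i _ => tailWeight_nonneg τ hK i]
  apply ENNReal.ofReal_le_ofReal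
  unfold tailWeight
  rw [← Finset.mul_sum, Finset.sum_range_sub' (fun m : ℕ => 1 / (K + (m : ℝ)))]
  have e : K ^ (-τ) = K ^ (1 - τ) * (1 / K) := by
    rw [one_div, ← Real.rpow_neg_one K, ← Real.rpow_add hK0]; congr 1; ring
  rw [e, ← mul_assoc]
  have : 0 ≤ 1 / (K + n) := by positivity
  gcongr
  simpa using this

lemma tsum_int_tailWeight_le (τ : ℝ) {K : ℝ} (hK : 1 ≤ K) :
    ∑' a : ℤ, ENNReal.ofReal (tailWeight τ K a.natAbs) ≤ ENNReal.ofReal (16 * K ^ (-τ)) := by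
  set f : ℤ → ENNReal := fun a => ENNReal.ofReal (tailWeight τ K a.natAbs) with hf
  have h := HasSum.of_nat_of_neg_add_one (f := f) ENNReal.summable.hasSum ENNReal.summable.hasSum
  rw [h.tsum_eq]
  have e1 : ∀ n : ℕ, f n = ENNReal.ofReal (tailWeight τ K n) := fun n => by simp [hf]
  have e2 : ∀ n : ℕ, f (-(n + 1)) = ENNReal.ofReal (tailWeight τ K (n + 1)) := fun n => by
    have : (-((n : ℤ) + 1)).natAbs = n + 1 := by omega
    simp only [hf, this]
  simp only [e1, e2]
  have h2 : ∑' n : ℕ, ENNReal.ofReal (tailWeight τ K (n + 1))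
      ≤ ∑' n : ℕ, ENNReal.ofReal (tailWeight τ K n) :=
    ENNReal.tsum_comp_le_tsum_of_injective (add_left_injective 1)
      fun n => ENNReal.ofReal (tailWeight τ K n)
  calc _ ≤ ENNReal.ofReal (8 * K ^ (-τ)) + ENNReal.ofReal (8 * K ^ (-τ)) :=
        add_le_add (tsum_tailWeight_le τ hK) (h2.trans (tsum_tailWeight_le τ hK))
    _ = _ := by
        rw [← ENNReal.ofReal_add (by positivity) (by positivity)]; congr 1; ring

/-- The parameters `l ∈ [0, lam₀]` violating the lower bound at the frequency vector `(a, b)`,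
for the frequencies `(x + l, y)`. -/
def resonant (τ α lam₀ x y : ℝ) (a b : ℤ) : Set ℝ :=
  {l ∈ Set.Icc (0 : ℝ) lam₀ |
    |(a : ℝ) * (x + l) + (b : ℝ) * y| < α / (2 * (|(a : ℝ)| + |(b : ℝ)|) ^ (2 * τ + 2))}

/-- Either the resonant set of `(a, b)` is empty, or `|a| + |b|` is at least the threshold `K`, and
then a set on which a function of slope `a ≠ 0` stays small has small measure. -/
lemma volume_resonant_le {τ α lam₀ x y K : ℝ} (hτ : 1 < τ) (hα : 0 < α) (hlam : 0 < lam₀)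
    (hK : 1 ≤ K) (hKe : K ^ (τ + 1) = α / (2 * lam₀)) {a b : ℤ} (hab : a ≠ 0 ∨ b ≠ 0)
    (hdio : α / (|(a : ℝ)| + |(b : ℝ)|) ^ τ ≤ |(a : ℝ) * x + (b : ℝ) * y|) :
    volume (resonant τ α lam₀ x y a b) ≤ ENNReal.ofReal α *
      (ENNReal.ofReal (tailWeight τ K a.natAbs) * ENNReal.ofReal (tailWeight τ K b.natAbs)) := by
  rcases (resonant τ α lam₀ x y a b).eq_empty_or_nonempty with he | ⟨l, ⟨hl0, hl1⟩, hl⟩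
  · simp [he]
  set N : ℝ := |(a : ℝ)| + |(b : ℝ)| with hNdef
  have hN : 1 ≤ N := by
    have : (1 : ℤ) ≤ |a| + |b| := by
      rcases hab with h | h
      · have := Int.one_le_abs h; have := abs_nonneg b; omega
      · have := Int.one_le_abs h; have := abs_nonneg a; omega
    rw [hNdef]; exact_mod_cast this
  have hN0 : 0 < N := by linarith
  have hNτ : 0 < N ^ τ := by positivity
  have hpow : N ^ τ ≤ N ^ (2 * τ + 2) := Real.rpow_le_rpow_of_exponent_le hN (by linarith)
  have hhalf : α / (2 * N ^ (2 * τ + 2)) ≤ α / N ^ τ / 2 := by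
    rw [div_div, mul_comm (N ^ τ)]; gcongr
  have htri : |(a : ℝ) * x + b * y| ≤ |(a : ℝ) * (x + l) + b * y| + |(a : ℝ)| * l := by
    have h := abs_add_le ((a : ℝ) * (x + l) + b * y) (-(a * l))
    rw [abs_neg, abs_mul (a : ℝ) l, abs_of_nonneg hl0] at h
    have e : (a : ℝ) * (x + l) + b * y + -(a * l) = a * x + b * y := by ring
    rwa [e] at h
  have hmain : α / N ^ τ / 2 < |(a : ℝ)| * l := by linarith
  have ha : a ≠ 0 := by
    rintro rfl
    have : 0 < α / N ^ τ / 2 := by positivity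
    simp at hmain
    linarith
  have ha1 : (1 : ℝ) ≤ |(a : ℝ)| := by exact_mod_cast Int.one_le_abs ha
  have hNl : α / N ^ τ / 2 < N * lam₀ :=
    hmain.trans_le (mul_le_mul (by rw [hNdef]; linarith [abs_nonneg (b : ℝ)]) hl1 hl0 hN0.le)
  have hKN : K ≤ N := by
    have : K ^ (τ + 1) ≤ N ^ (τ + 1) := by
      rw [hKe, Real.rpow_add hN0, Real.rpow_one, div_le_iff₀ (by positivity)]
      rw [div_div, div_lt_iff₀ (by positivity)] at hNl
      linarith
    exact (Real.rpow_le_rpow_iff (by linarith) hN0.le (by linarith)).1 this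
  have hsub : resonant τ α lam₀ x y a b ⊆
      Metric.closedBall (-((a : ℝ) * x + b * y) / a) (α / (2 * N ^ (2 * τ + 2))) := by
    rintro t ⟨-, ht⟩
    rw [Metric.mem_closedBall, Real.dist_eq]
    have ha' : (a : ℝ) ≠ 0 := by exact_mod_cast ha
    have e : (a : ℝ) * (x + t) + b * y = a * (t - -((a : ℝ) * x + b * y) / a) := by
      field_simp; ring
    rw [e, abs_mul] at ht
    have := le_mul_of_one_le_left (abs_nonneg (t - -((a : ℝ) * x + b * y) / a)) ha1
    exact this.trans ht.le
  refine (measure_mono hsub).trans ?_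
  rw [Real.volume_closedBall, ← ENNReal.ofReal_mul (tailWeight_nonneg τ hK _),
    ← ENNReal.ofReal_mul hα.le]
  apply ENNReal.ofReal_le_ofReal
  have e : 2 * (α / (2 * N ^ (2 * τ + 2))) = α * ((N ^ (τ + 1))⁻¹ * (N ^ (τ + 1))⁻¹) := by
    rw [← mul_inv, ← Real.rpow_add hN0, show τ + 1 + (τ + 1) = 2 * τ + 2 by ring]
    have : N ^ (2 * τ + 2) ≠ 0 := by positivity
    field_simp
  rw [e]
  have h1 : ((a.natAbs : ℕ) : ℝ) ≤ N := by
    rw [Nat.cast_natAbs, Int.cast_abs, hNdef]; linarith [abs_nonneg (b : ℝ)]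
  have h2 : ((b.natAbs : ℕ) : ℝ) ≤ N := by
    rw [Nat.cast_natAbs, Int.cast_abs, hNdef]; linarith [abs_nonneg (a : ℝ)]
  have := inv_rpow_le_tailWeight hτ hK hKN _ h1
  have := inv_rpow_le_tailWeight hτ hK hKN _ h2
  have := tailWeight_nonneg τ hK a.natAbs
  gcongr

/-- With `K = (α / (2 lam₀)) ^ (1/(τ+1))`, the total `α (16 K^(-τ))²` of the resonant measures is
of the required size. -/
lemma final_bound {τ α lam₀ : ℝ} (hτ : 1 < τ) (hα : 0 < α) (hlam : 0 < lam₀) :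
    α * (16 * ((α / (2 * lam₀)) ^ (1 / (τ + 1))) ^ (-τ) *
        (16 * ((α / (2 * lam₀)) ^ (1 / (τ + 1))) ^ (-τ)))
      ≤ 1024 * lam₀ * (lam₀ / α) ^ ((τ - 1) / (τ + 1)) := by
  set e := (τ - 1) / (τ + 1) with he
  have hτ1 : 0 < τ + 1 := by linarith
  have he1 : e ≤ 1 := by rw [he, div_le_one hτ1]; linarith
  set r := lam₀ / α with hr
  have hr0 : 0 < r := by positivity
  have hA : α / (2 * lam₀) = (2 * r)⁻¹ := by rw [hr]; field_simp
  have hsq : ((α / (2 * lam₀)) ^ (1 / (τ + 1))) ^ (-τ) * ((α / (2 * lam₀)) ^ (1 / (τ + 1))) ^ (-τ)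
      = 2 * r * (2 ^ e * r ^ e) := by
    have h2r : 0 < 2 * r := by positivity
    rw [hA, ← Real.rpow_mul (by positivity), ← Real.rpow_add (by positivity),
      Real.inv_rpow h2r.le, ← Real.rpow_neg h2r.le, ← Real.mul_rpow (by norm_num) hr0.le]
    nth_rewrite 2 [← Real.rpow_one (2 * r)]
    rw [← Real.rpow_add h2r]
    congr 1
    rw [he]; field_simp; ring
  have h2e : (2 : ℝ) ^ e ≤ 2 := by
    simpa using Real.rpow_le_rpow_of_exponent_le (by norm_num : (1 : ℝ) ≤ 2) he1
  have hre : 0 ≤ r ^ e := by positivity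
  have hαr : α * r = lam₀ := by rw [hr]; field_simp
  calc _ = 256 * α * (((α / (2 * lam₀)) ^ (1 / (τ + 1))) ^ (-τ) *
          ((α / (2 * lam₀)) ^ (1 / (τ + 1))) ^ (-τ)) := by ring
    _ = 512 * (α * r) * r ^ e * 2 ^ e := by rw [hsq]; ring
    _ ≤ 512 * (α * r) * r ^ e * 2 := by gcongr
    _ = _ := by rw [hαr]; ring

/-- If ω₀ ∈ ℝ² is (α,τ)-Diophantine, then for sufficiently small lam₀ the set
Π_{lam₀} of λ ∈ [0,lam₀] with |k₁(ω₀₁+λ)+k₂ω₀₂| ≥ α/(2|k|^{2τ+2}) for all k ≠ 0 is non-empty,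
and meas([0,lam₀] ∖ Π_{lam₀}) ≤ c lam₀ (lam₀/α)^{(τ−1)/(τ+1)} (hence o(lam₀)). -/
theorem stmt5 (τ α : ℝ) (hτ : 1 < τ) (hα : 0 < α) (hα1 : α < 1)
    (ω₀ : Fin 2 → ℝ)
    (hdio : ∀ k : Fin 2 → ℤ, k ≠ 0 →
      α / (∑ i, |(k i : ℝ)|) ^ τ ≤ |∑ i, (k i : ℝ) * ω₀ i|) :
    ∃ c > 0, ∃ lam₁ > 0, ∀ lam₀ : ℝ, 0 < lam₀ → lam₀ ≤ lam₁ →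
      ∃ S : Set ℝ,
        S = {l ∈ Set.Icc (0 : ℝ) lam₀ | ∀ k : Fin 2 → ℤ, k ≠ 0 →
          α / (2 * (∑ i, |(k i : ℝ)|) ^ (2 * τ + 2))
            ≤ |(k 0 : ℝ) * (ω₀ 0 + l) + (k 1 : ℝ) * ω₀ 1|} ∧
        S.Nonempty ∧
        volume (Set.Icc (0 : ℝ) lam₀ \ S)
          ≤ ENNReal.ofReal (c * lam₀ * (lam₀ / α) ^ ((τ - 1) / (τ + 1))) := by
  set e := (τ - 1) / (τ + 1) with he
  have hτ1 : 0 < τ + 1 := by linarith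
  have he0 : 0 < e := div_pos (by linarith) hτ1
  -- The first bound on `lam₀` makes `K ≥ 1`, the second makes the final estimate at most `lam₀ / 4`.
  refine ⟨1024, by norm_num, min (α / 2) (α * (1 / 4096) ^ (1 / e)), by positivity, ?_⟩
  intro lam₀ hlam hle
  refine ⟨_, rfl, ?_⟩
  set S : Set ℝ := {l ∈ Set.Icc (0 : ℝ) lam₀ | ∀ k : Fin 2 → ℤ, k ≠ 0 →
          α / (2 * (∑ i, |(k i : ℝ)|) ^ (2 * τ + 2))
            ≤ |(k 0 : ℝ) * (ω₀ 0 + l) + (k 1 : ℝ) * ω₀ 1|} with hS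
  set K := (α / (2 * lam₀)) ^ (1 / (τ + 1)) with hKdef
  have hquot : 1 ≤ α / (2 * lam₀) := by
    rw [one_le_div (by positivity)]; linarith [hle.trans (min_le_left _ _)]
  have hK : 1 ≤ K := Real.one_le_rpow hquot (by positivity)
  have hKe : K ^ (τ + 1) = α / (2 * lam₀) := by
    rw [hKdef, ← Real.rpow_mul (by positivity), one_div, inv_mul_cancel₀ hτ1.ne', Real.rpow_one]
  have hcover : Set.Icc (0 : ℝ) lam₀ \ S ⊆
      ⋃ p : ℤ × ℤ, {l | (p.1 ≠ 0 ∨ p.2 ≠ 0) ∧ l ∈ resonant τ α lam₀ (ω₀ 0) (ω₀ 1) p.1 p.2} := by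
    rintro l ⟨hl, hlS⟩
    have : ∃ k : Fin 2 → ℤ, k ≠ 0 ∧ |(k 0 : ℝ) * (ω₀ 0 + l) + (k 1 : ℝ) * ω₀ 1| <
        α / (2 * (∑ i, |(k i : ℝ)|) ^ (2 * τ + 2)) := by
      by_contra! h
      exact hlS ⟨hl, h⟩
    obtain ⟨k, hk, hlt⟩ := this
    rw [Fin.sum_univ_two] at hlt
    refine Set.mem_iUnion.2 ⟨(k 0, k 1), ?_, hl, hlt⟩
    by_contra! h
    exact hk (funext fun i => by fin_cases i; exacts [h.1, h.2])
  have hp : ∀ p : ℤ × ℤ,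
      volume {l | (p.1 ≠ 0 ∨ p.2 ≠ 0) ∧ l ∈ resonant τ α lam₀ (ω₀ 0) (ω₀ 1) p.1 p.2} ≤
        ENNReal.ofReal α * (ENNReal.ofReal (tailWeight τ K p.1.natAbs) *
          ENNReal.ofReal (tailWeight τ K p.2.natAbs)) := by
    rintro ⟨a, b⟩
    by_cases hab : a ≠ 0 ∨ b ≠ 0
    · have hk : (![a, b] : Fin 2 → ℤ) ≠ 0 := by
        intro h
        have h0 := congrFun h 0
        have h1 := congrFun h 1
        simp at h0 h1
        tauto
      have hd := hdio ![a, b] hk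
      simp only [Fin.sum_univ_two, Matrix.cons_val_zero, Matrix.cons_val_one] at hd
      refine (measure_mono ?_).trans (volume_resonant_le hτ hα hlam hK hKe hab hd)
      exact fun l hl => hl.2
    · simp [hab]
  have hvol : volume (Set.Icc (0 : ℝ) lam₀ \ S)
      ≤ ENNReal.ofReal (1024 * lam₀ * (lam₀ / α) ^ e) := by
    refine (measure_mono hcover).trans <| (measure_iUnion_le _).trans <|
      (ENNReal.tsum_le_tsum hp).trans ?_
    rw [ENNReal.tsum_mul_left, ENNReal.tsum_prod']
    simp only [ENNReal.tsum_mul_left, ENNReal.tsum_mul_right]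
    have hs := tsum_int_tailWeight_le τ hK
    have hK0 : 0 ≤ 16 * K ^ (-τ) := by positivity
    refine (mul_le_mul_right (mul_le_mul' hs hs) _).trans ?_
    rw [← ENNReal.ofReal_mul hK0, ← ENNReal.ofReal_mul hα.le]
    exact ENNReal.ofReal_le_ofReal (final_bound hτ hα hlam)
  refine ⟨?_, hvol⟩
  by_contra hne
  rw [Set.not_nonempty_iff_eq_empty] at hne
  rw [hne, Set.sdiff_empty, Real.volume_Icc, sub_zero,
    ENNReal.ofReal_le_ofReal_iff (by positivity)] at hvol
  have hsmall : (lam₀ / α) ^ e ≤ 1 / 4096 := by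
    have h1 : lam₀ / α ≤ (1 / 4096) ^ (1 / e) := by
      rw [div_le_iff₀ hα]; linarith [hle.trans (min_le_right _ _)]
    calc (lam₀ / α) ^ e ≤ ((1 / 4096 : ℝ) ^ (1 / e)) ^ e :=
          Real.rpow_le_rpow (by positivity) h1 he0.le
      _ = 1 / 4096 := by
          rw [← Real.rpow_mul (by norm_num), one_div_mul_cancel he0.ne', Real.rpow_one]
  nlinarith
end

section
/- Let O ⊆ ℝⁿ be open bounded connected, Ω(ω) = β + ω·M with β ∈ ℝ^{n̄} satisfying ⟨l, β⟩ ≠ 0 for all l ∈ ℤ^{n̄} with 1 ≤ |l| ≤ 2, and M an n×n̄ constant matrix. Let ω₀ ∈ O with (ω₀, Ω(ω₀)) ∈ Õ_{α,τ}. Let ω̂, Ω̂ ∈ C¹(O) and (ω_*, Ω_*) = (ω + ω̂, Ω + Ω̂). Then there exists σ₀ > 0 such that if ‖ω̂‖_{C¹} + ‖Ω̂‖_{C¹} = σ ≤ σ₀, there exists a non-empty set I*_σ ⊆ [−σ, σ] with meas([−σ,σ] ∖ I*_σ) = o(σ), and for every λ ∈ I*_σ there exists ϖ ∈ O with ω_*(ϖ)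 = (1+λ)ω₀ and (ω_*(ϖ), Ω_*(ϖ)) ∈ Õ_{α/4, 2τ+1}. -/
/-!
By the contraction principle `ω ↦ ω + ω̂(ω)` attains the value `(1 + λ) ω₀` at a point `ϖ(λ)` close
to `ω₀`, for every `|λ| ≤ σ` (`exists_preimage`). Along this curve each small divisor has the form

  `f(λ) = (1 + λ) A + B + O(σ)`, with `A = ⟨k, ω₀⟩ + ⟨l, ω₀ M⟩` and `B = ⟨l, β⟩`,

where the remainder also has Lipschitz constant `O(σ)` (`exists_branch`). For `l = 0` the divisor is
merely rescaled, and for `k = 0` it is `O(σ)`-close to its value at `ω₀`; neither needs excluding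
any `λ`.

For `k ≠ 0`, `l ≠ 0` one has `|A + B| ≥ α / |k| ^ τ`. As long as `|k| ^ τ ≤ c / σ` this lower bound
absorbs all perturbations. If `|k| ^ τ > c / σ`, then either `A` is small and `f ≈ B ≠ 0`, or `A` is
bounded away from `0`, in which case `f` is expanding and the set of resonant `λ` has measure
`O(|k| ^ (-(2τ + 1))) = O(σ |k| ^ (-(τ + 1)))` (`volume_resonance_le`). There are finitely many `l`,
so the total excluded measure is at most a constant times `σ` times the tail `|k| ^ τ > c / σ` of
`∑ |k| ^ (-(τ + 1))`. That series converges since `τ + 1 > n`, so its tail tends to `0`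
(`tendsto_tail`) and the excluded measure is `o(σ)`; in particular it is eventually less than the
length `2σ` of the interval, whence non-emptiness.
-/


open MeasureTheory

/-- The Melnikov-type Diophantine set Õ_{α,τ} ⊆ ℝⁿ × ℝ^{n̄}. -/
def TildeDio (n nb : ℕ) (α τ : ℝ) : Set ((Fin n → ℝ) × (Fin nb → ℝ)) :=
  {p | (∀ k : Fin n → ℤ, k ≠ 0 → ∀ l : Fin nb → ℤ, (∑ j, |l j|) ≤ 2 →
          α / (∑ i, |(k i : ℝ)|) ^ τ
            ≤ |∑ i, (k i : ℝ) * p.1 i + ∑ j, (l j : ℝ) * p.2 j|) ∧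
       (∀ l : Fin nb → ℤ, 1 ≤ ∑ j, |l j| → (∑ j, |l j|) ≤ 2 →
          α ≤ |∑ j, (l j : ℝ) * p.2 j|)}


/-! ### Lattice sums -/

lemma l1_one_le {n : ℕ} {k : Fin n → ℤ} (hk : k ≠ 0) : 1 ≤ ∑ i, |(k i : ℝ)| := by
  obtain ⟨i, hi⟩ := Function.ne_iff.mp hk
  have h1 : (1 : ℝ) ≤ |(k i : ℝ)| := by exact_mod_cast Int.one_le_abs hi
  exact h1.trans (Finset.single_le_sum (f := fun i => |(k i : ℝ)|)
    (fun _ _ => abs_nonneg _) (Finset.mem_univ i))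

/-- The lattice sum `∑ |k|₁ ^ (-s)` converges for `s > n`. The term at `k = 0` is the junk value
`0 ^ (-s) = 0`. -/
lemma summable_l1_rpow (n : ℕ) (s : ℝ) (hs : (n : ℝ) < s) :
    Summable fun k : Fin n → ℤ => (∑ i, |(k i : ℝ)|) ^ (-s) := by
  let L : Submodule ℤ (Fin n → ℝ) := Submodule.span ℤ (Set.range (Pi.basisFun ℝ (Fin n)))
  have hrank : Module.finrank ℤ L = n := by
    rw [ZLattice.rank ℝ L]; simp
  have hsum := ZLattice.summable_norm_rpow L (-s) (by rw [hrank]; linarith)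
  have hmem : ∀ k : Fin n → ℤ, (fun i => (k i : ℝ)) ∈ L := by
    intro k
    rw [Module.Basis.mem_span_iff_repr_mem]
    intro i
    exact ⟨k i, by simp⟩
  have hinj : Function.Injective fun k : Fin n → ℤ => (⟨_, hmem k⟩ : L) := by
    intro k k' h
    funext i
    have hi : (k i : ℝ) = k' i := congrFun (congrArg Subtype.val h) i
    exact_mod_cast hi
  refine Summable.of_nonneg_of_le (fun k => by positivity) (fun k => ?_)
    (hsum.comp_injective hinj)
  by_cases hk : k = 0
  · subst hk
    apply le_of_eq
    have h0 : ‖(fun _ => 0 : Fin n → ℝ)‖ = 0 := norm_zero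
    simp [h0]
  · -- away from `0`, compare with the sup norm, for which the lattice sum is known to converge
    simp only [Function.comp]
    have hpos : 0 < ‖(⟨fun i => (k i : ℝ), hmem k⟩ : L)‖ := by
      rw [norm_pos_iff]
      intro h
      refine hk (funext fun i => ?_)
      have hi : (k i : ℝ) = 0 := congrFun (congrArg Subtype.val h) i
      exact_mod_cast hi
    refine Real.rpow_le_rpow_of_nonpos hpos ?_ (by have := n.cast_nonneg (α := ℝ); linarith)
    change ‖(fun i => (k i : ℝ))‖ ≤ _
    rw [pi_norm_le_iff_of_nonneg (by positivity)]
    intro i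
    exact Finset.single_le_sum (f := fun i => |(k i : ℝ)|)
      (fun _ _ => abs_nonneg _) (Finset.mem_univ i)

/-- The tail of the convergent sum of `|k|₁ ^ (-(τ + 1))` over those `k` with `|k|₁ ^ τ > c / σ`
vanishes as `σ → 0⁺`; convergence is exactly the condition `τ > n - 1`. -/
lemma tendsto_tail {n : ℕ} {τ c : ℝ} (hτ : (n : ℝ) - 1 < τ) (hc : 0 < c) :
    Filter.Tendsto (fun σ : ℝ => ∑' k : Fin n → ℤ,
      if c / σ < (∑ i, |(k i : ℝ)|) ^ τ then (∑ i, |(k i : ℝ)|) ^ (-(τ + 1)) else 0)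
      (nhdsWithin 0 (Set.Ioi 0)) (nhds 0) := by
  have hdiv : Filter.Tendsto (fun σ : ℝ => c / σ) (nhdsWithin 0 (Set.Ioi 0)) Filter.atTop := by
    simp only [div_eq_mul_inv]
    exact tendsto_inv_nhdsGT_zero.const_mul_atTop hc
  have e : nhds (0 : ℝ) = nhds (∑' _ : Fin n → ℤ, (0 : ℝ)) := by rw [tsum_zero]
  refine (tendsto_tsum_of_dominated_convergence
    (summable_l1_rpow n (τ + 1) (by linarith)) (fun k => ?_)
    (.of_forall fun σ k => ?_)).mono_right e.ge
  · refine tendsto_const_nhds.congr' ?_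
    filter_upwards [hdiv.eventually_ge_atTop ((∑ i, |(k i : ℝ)|) ^ τ)] with σ h
    rw [if_neg (not_lt.mpr h)]
  · split_ifs
    · rw [Real.norm_of_nonneg (by positivity)]
    · simp; positivity

/-! ### Solving for the perturbed frequency -/

/-- A `σ`-small, `σ`-Lipschitz perturbation of the identity on a closed ball attains every value
`y` sufficiently close to the centre: `x ↦ y - g x` is a contraction of the ball. -/
lemma exists_preimage {E : Type*} [NormedAddCommGroup E] [NormedSpace ℝ E] [CompleteSpace E]
    {g : E → E} {x₀ y : E} {r σ : ℝ} (hσ : 0 ≤ σ) (hσ1 : σ ≤ 1 / 2) (hr : 0 ≤ r)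
    (hg : ∀ x ∈ Metric.closedBall x₀ r, ‖g x‖ ≤ σ)
    (hlip : ∀ x ∈ Metric.closedBall x₀ r, ∀ x' ∈ Metric.closedBall x₀ r,
      ‖g x - g x'‖ ≤ σ * ‖x - x'‖)
    (hy : ‖y - x₀‖ + σ ≤ r) :
    ∃ x ∈ Metric.closedBall x₀ r, x + g x = y := by
  have hmaps : Set.MapsTo (fun x => y - g x) (Metric.closedBall x₀ r)
      (Metric.closedBall x₀ r) := by
    intro x hx
    rw [mem_closedBall_iff_norm]
    calc ‖y - g x - x₀‖ = ‖(y - x₀) - g x‖ := by congr 1; abel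
      _ ≤ ‖y - x₀‖ + ‖g x‖ := norm_sub_le _ _
      _ ≤ r := by linarith [hg x hx]
  have hcontr : ContractingWith σ.toNNReal (hmaps.restrict _ _ _) := by
    refine ⟨?_, LipschitzWith.of_dist_le_mul ?_⟩
    · rw [Real.toNNReal_lt_one]; linarith
    · rintro ⟨x, hx⟩ ⟨x', hx'⟩
      simp only [Subtype.dist_eq, Set.MapsTo.val_restrict_apply, dist_eq_norm,
        Real.coe_toNNReal σ hσ]
      calc ‖y - g x - (y - g x')‖ = ‖g x - g x'‖ := by rw [← norm_neg]; congr 1; abel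
        _ ≤ _ := hlip x hx x' hx'
  obtain ⟨x, hx, hfix, -⟩ := ContractingWith.exists_fixedPoint' (x := x₀)
    Metric.isClosed_closedBall.isComplete hmaps hcontr (Metric.mem_closedBall_self hr)
    (edist_ne_top _ _)
  refine ⟨x, hx, ?_⟩
  have : y - g x = x := hfix
  rw [← eq_sub_iff_add_eq, this]

/-! ### A single small divisor -/

/-- Measure of the resonant set of a single divisor `f x = A (1 + x) + B + O(σ)` with
`f x - f y = (x - y) A + O(σ |x - y|)`, where `N` plays the role of `|k|`. The set is empty while
`N ^ τ ≤ c / σ`, since then the Diophantine bound at `x = 0` survives. For larger `N` either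
`|A| < b / 2` and `f` stays away from zero because `|B| ≥ b`, or `f` expands distances by `b / 4`,
so that the resonant set has diameter `O(N ^ (-(2 τ + 1)))`; splitting off a factor
`N ^ (-τ) < σ / c` gives the stated bound. -/
lemma volume_resonance_le {α τ b H C c A B N σ : ℝ} {f : ℝ → ℝ} (hα : 0 < α) (hα1 : α < 1)
    (hτ : 0 < τ) (hb : 0 < b) (hbB : b ≤ |B|) (hBH : |B| ≤ H) (hC : 0 ≤ C) (hc : 0 < c)
    (hcα : c * (2 * (4 * H + 4 + C)) ≤ α) (hN : 1 ≤ N) (hdio : α / N ^ τ ≤ |A + B|)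
    (hσ : 0 < σ) (hσ1 : σ ≤ 1 / 2) (hCb : C * σ ≤ b / 8)
    (hcb : α / 4 * σ ≤ c * (b / 8))
    (h0 : ∀ x ∈ Set.Icc (-σ) σ, |f x - (A * (1 + x) + B)| ≤ C * σ)
    (h1 : ∀ x ∈ Set.Icc (-σ) σ, ∀ y ∈ Set.Icc (-σ) σ,
      |f x - f y - (x - y) * A| ≤ C * σ * |x - y|) :
    volume {x ∈ Set.Icc (-σ) σ | |f x| < α / 4 / N ^ (2 * τ + 1)} ≤
      ENNReal.ofReal (2 * α / (b * c) * σ * if c / σ < N ^ τ then N ^ (-(τ + 1)) else 0) := by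
  have hN0 : 0 < N := by linarith
  have hT : 1 ≤ N ^ τ := Real.one_le_rpow hN hτ.le
  have hT1 : N ^ τ ≤ N ^ (2 * τ + 1) := Real.rpow_le_rpow_of_exponent_le hN (by linarith)
  have hT2 : 1 ≤ N ^ (2 * τ + 1) := hT.trans hT1
  have hsplit : N ^ (2 * τ + 1) = N ^ τ * N ^ (τ + 1) := by
    rw [← Real.rpow_add hN0]; congr 1; ring
  set d := α / 4 / N ^ (2 * τ + 1) with hd
  have hd0 : 0 < d := by positivity
  have hd1 : d ≤ 1 / 4 := by
    rw [hd, div_le_iff₀ (by positivity)]; nlinarith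
  have hd2 : d ≤ α / 4 / N ^ τ := by rw [hd]; gcongr
  have hH : 0 ≤ H := (abs_nonneg _).trans hBH
  have hlamA : ∀ x ∈ Set.Icc (-σ) σ, |x * A| ≤ σ * |A| := by
    intro x hx
    rw [abs_mul]; gcongr; exact abs_le.mpr hx
  have habs : ∀ x ∈ Set.Icc (-σ) σ, |A + B| - σ * |A| - C * σ ≤ |f x| := by
    intro x hx
    have e : A + B = f x + (-(f x - (A * (1 + x) + B)) + -(x * A)) := by ring
    have := abs_add_three (f x) (-(f x - (A * (1 + x) + B))) (-(x * A))
    rw [abs_neg, abs_neg, add_assoc, ← e] at this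
    linarith [h0 x hx, hlamA x hx]
  have hABu : |A| - |B| ≤ |A + B| := by
    have := abs_sub_abs_le_abs_sub A (-B); simpa using this
  have hABl : |B| - |A| ≤ |A + B| := by
    have := abs_sub_abs_le_abs_sub B (-A); rw [add_comm]; simpa using this
  have hAnn := abs_nonneg A
  split_ifs with hbig
  · by_cases hA : b / 2 ≤ |A|
    · -- `f` expands distances by at least `b / 4`
      have hexp : ∀ x ∈ Set.Icc (-σ) σ, ∀ y ∈ Set.Icc (-σ) σ,
          b / 4 * |x - y| ≤ |f x - f y| := by
        intro x hx y hy
        have e := abs_sub_abs_le_abs_sub ((x - y) * A) ((x - y) * A - (f x - f y))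
        rw [sub_sub_cancel, abs_sub_comm ((x - y) * A), abs_mul] at e
        have := h1 x hx y hy
        nlinarith [abs_nonneg (x - y)]
      refine (Real.volume_le_diam _).trans (Metric.ediam_le ?_)
      rintro x ⟨hx, hfx⟩ y ⟨hy, hfy⟩
      rw [edist_dist, Real.dist_eq]
      refine ENNReal.ofReal_le_ofReal ?_
      have h2 : |f x - f y| ≤ 2 * d := by
        have := abs_sub (f x) (f y); linarith
      have h3 : |x - y| ≤ 8 * d / b := by
        rw [le_div_iff₀ hb]; nlinarith [hexp x hx y hy]
      refine h3.trans ?_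
      have h4 : 1 / N ^ τ ≤ σ / c := by
        rw [div_le_div_iff₀ (by positivity) hc]
        rw [div_lt_iff₀ hσ] at hbig
        linarith
      calc 8 * d / b = 2 * α / b * (1 / N ^ τ) * N ^ (-(τ + 1)) := by
            rw [hd, hsplit, Real.rpow_neg hN0.le]; field_simp; norm_num
        _ ≤ 2 * α / b * (σ / c) * N ^ (-(τ + 1)) := by gcongr
        _ = _ := by field_simp
    · -- `f` stays close to `B`, so the resonance does not occur
      have hempty : {x ∈ Set.Icc (-σ) σ | |f x| < d} = ∅ := by
        refine Set.eq_empty_of_forall_notMem ?_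
        rintro x ⟨hx, hfx⟩
        have h5 := habs x hx
        have h6 : d ≤ b / 8 := by
          -- `N ^ τ > c / σ` makes the threshold `d` itself `O(σ)`
          refine hd2.trans ?_
          rw [div_le_iff₀ (by positivity)]
          rw [div_lt_iff₀ hσ] at hbig
          have : α / 4 * σ ≤ b / 8 * N ^ τ * σ := by nlinarith
          exact le_of_mul_le_mul_right this hσ
        push Not at hA
        nlinarith
      rw [hempty]; simp
  · have hempty : {x ∈ Set.Icc (-σ) σ | |f x| < d} = ∅ := by
      refine Set.eq_empty_of_forall_notMem ?_
      rintro x ⟨hx, hfx⟩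
      have h5 := habs x hx
      -- a large `A` dominates `B`; otherwise the drift `x A` over `[-σ, σ]` is `O(σ)`
      by_cases hA : 4 * (H + 1) ≤ |A|
      · nlinarith
      · push Not at hA hbig
        rw [le_div_iff₀ hσ] at hbig
        have h6 : σ * (4 * (H + 1) + C) ≤ α / 2 / N ^ τ := by
          rw [le_div_iff₀ (by positivity)]
          nlinarith
        have h7 : α / N ^ τ = α / 2 / N ^ τ + 2 * (α / 4 / N ^ τ) := by ring
        have h8 : 0 < α / 4 / N ^ τ := by positivity
        nlinarith
    rw [hempty]; simp

lemma rescaled_divisor_ge {α τ A N x : ℝ} (hα : 0 < α) (hτ : 0 < τ) (hN : 1 ≤ N)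
    (hA : α / N ^ τ ≤ |A|) (hx : -(1 / 2) ≤ x) :
    α / 4 / N ^ (2 * τ + 1) ≤ |A * (1 + x)| := by
  have hpow : N ^ τ ≤ N ^ (2 * τ + 1) := Real.rpow_le_rpow_of_exponent_le hN (by linarith)
  have h2 : 1 / 2 ≤ |1 + x| := (by linarith : 1 / 2 ≤ 1 + x).trans (le_abs_self _)
  rw [abs_mul]
  calc α / 4 / N ^ (2 * τ + 1) ≤ α / 4 / N ^ τ := by gcongr
    _ ≤ α / N ^ τ * (1 / 2) := by rw [div_mul_eq_mul_div]; gcongr; linarith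
    _ ≤ _ := by gcongr

/-! ### The curve of solutions and its normal frequencies -/

lemma norm_vecMul_le {n nb : ℕ} (M : Matrix (Fin n) (Fin nb) ℝ) (v : Fin n → ℝ) :
    ‖(fun j => ∑ i, v i * M i j)‖ ≤ (∑ i, ∑ j, |M i j|) * ‖v‖ := by
  rw [pi_norm_le_iff_of_nonneg (by positivity)]
  intro j
  refine (Finset.abs_sum_le_sum_abs _ _).trans ?_
  rw [Finset.sum_mul]
  refine Finset.sum_le_sum fun i _ => ?_
  rw [abs_mul, mul_comm]
  gcongr
  · exact Finset.single_le_sum (f := fun j => |M i j|) (fun _ _ => abs_nonneg _)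
      (Finset.mem_univ j)
  · exact norm_le_pi_norm v i

lemma abs_sum_int_mul_le {m : ℕ} {l : Fin m → ℤ} (hl : (∑ j, |l j|) ≤ 2) (v : Fin m → ℝ) :
    |∑ j, (l j : ℝ) * v j| ≤ 2 * ‖v‖ := by
  refine (Finset.abs_sum_le_sum_abs _ _).trans ?_
  have h : (∑ j, |(l j : ℝ)|) ≤ 2 := by exact_mod_cast hl
  calc ∑ j, |(l j : ℝ) * v j| ≤ ∑ j, |(l j : ℝ)| * ‖v‖ := by
        refine Finset.sum_le_sum fun j _ => ?_
        rw [abs_mul]; gcongr; exact norm_le_pi_norm v j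
    _ ≤ _ := by rw [← Finset.sum_mul]; gcongr

/-- Writing `w x` for the point where the perturbed frequency equals `(1 + x) ω₀`, the perturbed
normal frequency at `w x` is `β + (1 + x) ω₀ M + V x`, where `V` has size `O(σ)` and Lipschitz
constant `O(σ)`. -/
lemma exists_branch {n nb : ℕ} {O : Set (Fin n → ℝ)} (hO : IsOpen O) {ω₀ : Fin n → ℝ} {r σ : ℝ}
    (hr0 : 0 ≤ r) (hball : Metric.closedBall ω₀ r ⊆ O) (M : Matrix (Fin n) (Fin nb) ℝ)
    {g : (Fin n → ℝ) → Fin n → ℝ} {G : (Fin n → ℝ) → Fin nb → ℝ}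
    (hg : ContDiffOn ℝ 1 g O) (hG : ContDiffOn ℝ 1 G O) (hσ : 0 ≤ σ) (hs1 : σ ≤ 1 / 2)
    (hsr : (‖ω₀‖ + 1) * σ ≤ r)
    (hbd : ∀ x ∈ O, ‖g x‖ + ‖G x‖ + ‖fderiv ℝ g x‖ + ‖fderiv ℝ G x‖ ≤ σ) :
    ∃ w : ℝ → Fin n → ℝ, ∃ V : ℝ → Fin nb → ℝ, ∀ x ∈ Set.Icc (-σ) σ,
      w x ∈ Metric.closedBall ω₀ r ∧
      w x + g (w x) = (1 + x) • ω₀ ∧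
      (∀ j, ∑ i, w x i * M i j + G (w x) j = (1 + x) * ∑ i, ω₀ i * M i j + V x j) ∧
      ‖V x‖ ≤ ((∑ i, ∑ j, |M i j|) + 1) * σ ∧
      ∀ y ∈ Set.Icc (-σ) σ,
        ‖V x - V y‖ ≤ ((∑ i, ∑ j, |M i j|) + 1) * (σ * (2 * ‖ω₀‖ * |x - y|)) := by
  set m : ℝ := ∑ i, ∑ j, |M i j| with hm
  have hm0 : 0 ≤ m := by positivity
  have hLip : ∀ {p : ℕ} (h : (Fin n → ℝ) → Fin p → ℝ), ContDiffOn ℝ 1 h O →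
      (∀ x ∈ O, ‖fderiv ℝ h x‖ ≤ σ) → ∀ x ∈ Metric.closedBall ω₀ r,
      ∀ y ∈ Metric.closedBall ω₀ r, ‖h x - h y‖ ≤ σ * ‖x - y‖ := by
    intro p h hh hd x hx y hy
    exact (convex_closedBall ω₀ r).norm_image_sub_le_of_norm_fderiv_le
      (fun z hz => (hh.differentiableOn one_ne_zero).differentiableAt (hO.mem_nhds (hball hz)))
      (fun z hz => hd z (hball hz)) hy hx
  have hgB : ∀ x ∈ O, ‖g x‖ + ‖G x‖ ≤ σ := fun x hx => by
    linarith [hbd x hx, norm_nonneg (fderiv ℝ g x), norm_nonneg (fderiv ℝ G x)]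
  have hgL := hLip g hg fun x hx => by
    linarith [hbd x hx, norm_nonneg (g x), norm_nonneg (G x), norm_nonneg (fderiv ℝ G x)]
  have hGL := hLip G hG fun x hx => by
    linarith [hbd x hx, norm_nonneg (g x), norm_nonneg (G x), norm_nonneg (fderiv ℝ g x)]
  have hex : ∀ x ∈ Set.Icc (-σ) σ, ∃ w ∈ Metric.closedBall ω₀ r, w + g w = (1 + x) • ω₀ := by
    intro x hx
    refine exists_preimage hσ hs1 hr0
      (fun z hz => by linarith [hgB z (hball hz), norm_nonneg (G z)]) hgL ?_
    have e : (1 + x) • ω₀ - ω₀ = x • ω₀ := by rw [add_smul, one_smul, add_sub_cancel_left]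
    rw [e, norm_smul, Real.norm_eq_abs]
    have : |x| ≤ σ := abs_le.mpr hx
    nlinarith [norm_nonneg ω₀]
  choose! w hwB hw using hex
  have hwL : ∀ x ∈ Set.Icc (-σ) σ, ∀ y ∈ Set.Icc (-σ) σ,
      ‖w x - w y‖ ≤ 2 * ‖ω₀‖ * |x - y| := by
    intro x hx y hy
    have e : w x - w y = (x - y) • ω₀ - (g (w x) - g (w y)) := by
      have h1 := hw x hx
      have h2 := hw y hy
      have h3 : (x - y) • ω₀ = (w x + g (w x)) - (w y + g (w y)) := by rw [h1, h2]; module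
      rw [h3]
      abel
    have h1 := hgL _ (hwB x hx) _ (hwB y hy)
    have h2 := norm_sub_le ((x - y) • ω₀) (g (w x) - g (w y))
    rw [← e, norm_smul, Real.norm_eq_abs] at h2
    nlinarith [norm_nonneg (w x - w y)]
  let V : ℝ → Fin nb → ℝ := fun x =>
    (fun j => ∑ i, (-g (w x)) i * M i j) + G (w x)
  have hV0 : ∀ x ∈ Set.Icc (-σ) σ, ‖V x‖ ≤ (m + 1) * σ := by
    intro x hx
    have h1 := norm_vecMul_le M (-g (w x))
    have h2 := norm_add_le (fun j => ∑ i, (-g (w x)) i * M i j) (G (w x))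
    have h3 := hgB _ (hball (hwB x hx))
    rw [norm_neg] at h1
    change ‖V x‖ ≤ _ at h2
    nlinarith [norm_nonneg (g (w x)), norm_nonneg (G (w x))]
  have hV1 : ∀ x ∈ Set.Icc (-σ) σ, ∀ y ∈ Set.Icc (-σ) σ,
      ‖V x - V y‖ ≤ (m + 1) * (σ * (2 * ‖ω₀‖ * |x - y|)) := by
    intro x hx y hy
    have e : V x - V y =
        (fun j => ∑ i, (-(g (w x) - g (w y))) i * M i j) + (G (w x) - G (w y)) := by
      funext j
      simp only [V, Pi.add_apply, Pi.sub_apply, Pi.neg_apply]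
      rw [add_sub_add_comm, ← Finset.sum_sub_distrib]
      congr 1
      refine Finset.sum_congr rfl fun i _ => ?_
      ring
    rw [e]
    refine (norm_add_le _ _).trans ?_
    have h1 := norm_vecMul_le M (-(g (w x) - g (w y)))
    rw [norm_neg] at h1
    have h2 := hgL _ (hwB x hx) _ (hwB y hy)
    have h3 := hGL _ (hwB x hx) _ (hwB y hy)
    have h4 : σ * ‖w x - w y‖ ≤ σ * (2 * ‖ω₀‖ * |x - y|) := by
      gcongr; exact hwL x hx y hy
    have h5 := mul_le_mul_of_nonneg_left (h2.trans h4) hm0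
    linarith
  refine ⟨w, V, fun x hx => ⟨hwB x hx, hw x hx, fun j => ?_, hV0 x hx, hV1 x hx⟩⟩
  have hwx : w x = (1 + x) • ω₀ - g (w x) := eq_sub_of_add_eq (hw x hx)
  simp only [V, Pi.add_apply]
  rw [← add_assoc]
  congr 1
  rw [Finset.mul_sum, ← Finset.sum_add_distrib]
  refine Finset.sum_congr rfl fun i _ => ?_
  have := congrFun hwx i
  simp only [Pi.sub_apply, Pi.smul_apply, smul_eq_mul, Pi.neg_apply] at this ⊢
  linear_combination (M i j) * this

/-! ### Excluding the resonant parameters -/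

lemma finite_modes (m : ℕ) : {l : Fin m → ℤ | 1 ≤ ∑ j, |l j| ∧ (∑ j, |l j|) ≤ 2}.Finite := by
  refine (Set.finite_Icc (fun _ => -2 : Fin m → ℤ) (fun _ => 2)).subset ?_
  rintro l ⟨-, hl⟩
  have : ∀ j, |l j| ≤ 2 := fun j =>
    (Finset.single_le_sum (f := fun j => |l j|) (fun _ _ => abs_nonneg _)
      (Finset.mem_univ j)).trans hl
  exact ⟨fun j => (abs_le.mp (this j)).1, fun j => (abs_le.mp (this j)).2⟩

lemma exists_lower_bound {ι : Type*} (s : Finset ι) (f : ι → ℝ) (hf : ∀ x ∈ s, 0 < f x) :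
    ∃ b > 0, ∀ x ∈ s, b ≤ f x := by
  rcases s.eq_empty_or_nonempty with rfl | hs
  · exact ⟨1, one_pos, by simp⟩
  · obtain ⟨x, hx, hmin⟩ := s.exists_min_image f hs
    exact ⟨f x, hf x hx, hmin⟩

lemma eventually_mul_le (a : ℝ) {d : ℝ} (hd : 0 < d) :
    ∀ᶠ σ in nhdsWithin (0 : ℝ) (Set.Ioi 0), a * σ ≤ d := by
  have : Filter.Tendsto (fun σ : ℝ => a * σ) (nhdsWithin (0 : ℝ) (Set.Ioi 0)) (nhds (a * 0)) :=
    (Filter.tendsto_id.const_mul a).mono_left nhdsWithin_le_nhds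
  rw [mul_zero] at this
  exact (this.eventually_lt_const hd).mono fun _ h => h.le

/-- paper Proposition on affine normal frequencies: Ω(ω) = β + ω·M with
⟨l,β⟩ ≠ 0 for 1 ≤ |l| ≤ 2; ω₀ ∈ O with (ω₀, Ω(ω₀)) ∈ Õ_{α,τ}. For C¹ perturbations
ω̂, Ω̂ with C¹-norm σ ≤ σ₀ there is a non-empty set I⋆_σ ⊆ [−σ,σ] with
meas([−σ,σ] ∖ I⋆_σ) = o(σ), and for each λ ∈ I⋆_σ some ϖ ∈ O with
ω⋆(ϖ) = (1+λ)ω₀ and (ω⋆(ϖ), Ω⋆(ϖ)) ∈ Õ_{α/4, 2τ+1}. -/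
theorem stmt13 (n nb : ℕ) (τ α : ℝ) (hτ : (n : ℝ) - 1 < τ) (hα : 0 < α) (hα1 : α < 1)
    (O : Set (Fin n → ℝ)) (hO : IsOpen O) (hOb : Bornology.IsBounded O)
    (hOc : IsConnected O)
    (β : Fin nb → ℝ) (M : Matrix (Fin n) (Fin nb) ℝ)
    (hβ : ∀ l : Fin nb → ℤ, 1 ≤ ∑ j, |l j| → (∑ j, |l j|) ≤ 2 →
      (∑ j, (l j : ℝ) * β j) ≠ 0)
    (ω₀ : Fin n → ℝ) (hω₀ : ω₀ ∈ O)
    (hdio : ((ω₀, fun j => β j + ∑ i, ω₀ i * M i j) :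
      (Fin n → ℝ) × (Fin nb → ℝ)) ∈ TildeDio n nb α τ) :
    ∃ σ₀ > 0, ∃ err : ℝ → ℝ,
      Filter.Tendsto (fun σ => err σ / σ) (nhdsWithin 0 (Set.Ioi 0)) (nhds 0) ∧
      ∀ ωhat : (Fin n → ℝ) → Fin n → ℝ, ∀ Ωhat : (Fin n → ℝ) → Fin nb → ℝ,
        ContDiffOn ℝ 1 ωhat O → ContDiffOn ℝ 1 Ωhat O →
        ∀ σ : ℝ, 0 < σ → σ ≤ σ₀ →
        (∀ x ∈ O, ‖ωhat x‖ + ‖Ωhat x‖ + ‖fderiv ℝ ωhat x‖ + ‖fderiv ℝ Ωhat x‖ ≤ σ) →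
        ∃ S : Set ℝ, S ⊆ Set.Icc (-σ) σ ∧ S.Nonempty ∧
          volume (Set.Icc (-σ) σ \ S) ≤ ENNReal.ofReal (err σ) ∧
          ∀ lam ∈ S, ∃ ϖ ∈ O,
            (ϖ + ωhat ϖ = (1 + lam) • ω₀) ∧
            ((ϖ + ωhat ϖ, fun j => (β j + ∑ i, ϖ i * M i j) + Ωhat ϖ j) :
              (Fin n → ℝ) × (Fin nb → ℝ)) ∈ TildeDio n nb (α / 4) (2 * τ + 1) := by
  classical
  set Ls : Finset (Fin nb → ℤ) := (finite_modes nb).toFinset with hLs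
  have hmemL : ∀ l, l ∈ Ls ↔ 1 ≤ ∑ j, |l j| ∧ (∑ j, |l j|) ≤ 2 := by
    intro l; simp [hLs]
  obtain ⟨b, hb, hbB⟩ := exists_lower_bound Ls (fun l => |∑ j, (l j : ℝ) * β j|)
    (fun l hl => abs_pos.mpr (hβ l ((hmemL l).1 hl).1 ((hmemL l).1 hl).2))
  obtain ⟨R, hR, hRO⟩ := Metric.isOpen_iff.1 hO ω₀ hω₀
  set r := R / 2 with hr
  have hr0 : 0 < r := by positivity
  have hball : Metric.closedBall ω₀ r ⊆ O :=
    (Metric.closedBall_subset_ball (by linarith)).trans hRO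
  set m : ℝ := ∑ i, ∑ j, |M i j| with hm
  have hm0 : 0 ≤ m := by positivity
  set C : ℝ := 2 * (m + 1) * (1 + 2 * ‖ω₀‖) with hCdef
  have hC0 : 0 < C := by positivity
  set H : ℝ := 2 * ‖β‖ with hH
  set c : ℝ := α / (2 * (4 * H + 4 + C)) with hcdef
  have hc0 : 0 < c := by positivity
  have hcα : c * (2 * (4 * H + 4 + C)) ≤ α := by
    rw [hcdef, div_mul_cancel₀]; positivity
  let t : ℝ → (Fin n → ℤ) → ℝ := fun σ k =>
    if c / σ < (∑ i, |(k i : ℝ)|) ^ τ then (∑ i, |(k i : ℝ)|) ^ (-(τ + 1)) else 0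
  have ht0 : ∀ σ k, 0 ≤ t σ k := by
    intro σ k; simp only [t]; split_ifs <;> positivity
  have htsum : ∀ σ, Summable (t σ) := by
    intro σ
    refine (summable_l1_rpow n (τ + 1) (by linarith)).of_nonneg_of_le (ht0 σ) fun k => ?_
    simp only [t]; split_ifs
    · exact le_rfl
    · positivity
  set D : ℝ := 2 * α / (b * c) with hD
  have hD0 : 0 < D := by positivity
  let err : ℝ → ℝ := fun σ => ∑' k, Ls.card * (D * σ * t σ k)
  have herr : Filter.Tendsto (fun σ => err σ / σ) (nhdsWithin 0 (Set.Ioi 0)) (nhds 0) := by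
    have h := (tendsto_tail (n := n) hτ hc0).const_mul (Ls.card * D)
    rw [mul_zero] at h
    refine h.congr' ?_
    filter_upwards [self_mem_nhdsWithin] with σ hσ
    have hσ' : σ ≠ 0 := ne_of_gt hσ
    simp only [err, t]
    rw [tsum_mul_left, tsum_mul_left]
    field_simp
  have hev : ∀ᶠ σ in nhdsWithin (0 : ℝ) (Set.Ioi 0),
      1 * σ ≤ 1 / 2 ∧ C * σ ≤ b / 8 ∧ α / 4 * σ ≤ c * (b / 8) ∧
      C * σ ≤ α / 4 ∧ (‖ω₀‖ + 1) * σ ≤ r ∧ err σ / σ < 1 := by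
    filter_upwards [eventually_mul_le 1 (d := 1 / 2) (by norm_num),
      eventually_mul_le C (d := b / 8) (by positivity),
      eventually_mul_le (α / 4) (d := c * (b / 8)) (by positivity),
      eventually_mul_le C (d := α / 4) (by positivity),
      eventually_mul_le (‖ω₀‖ + 1) hr0, herr.eventually_lt_const one_pos]
      with σ h1 h2 h3 h4 h5 h6 using ⟨h1, h2, h3, h4, h5, h6⟩
  obtain ⟨σ₀, hσ₀, hsmall⟩ := mem_nhdsGT_iff_exists_Ioc_subset.1 hev
  refine ⟨σ₀, hσ₀, err, herr, ?_⟩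
  intro g G hg hG σ hσ hσσ₀ hbd
  obtain ⟨hs1, hsb, hscb, hsα, hsr, hserr⟩ := hsmall ⟨hσ, hσσ₀⟩
  rw [one_mul] at hs1
  obtain ⟨w, V, hwV⟩ := exists_branch hO hr0.le hball M hg hG hσ.le hs1 hsr hbd
  have hwB := fun x hx => (hwV x hx).1
  have hw := fun x hx => (hwV x hx).2.1
  have hwG := fun x hx => (hwV x hx).2.2.1
  have hV0 := fun x hx => (hwV x hx).2.2.2.1
  have hV1 := fun x hx => (hwV x hx).2.2.2.2
  let A : (Fin n → ℤ) → (Fin nb → ℤ) → ℝ := fun k l =>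
    ∑ i, (k i : ℝ) * ω₀ i + ∑ j, (l j : ℝ) * ∑ i, ω₀ i * M i j
  let B : (Fin nb → ℤ) → ℝ := fun l => ∑ j, (l j : ℝ) * β j
  let F : (Fin n → ℤ) → (Fin nb → ℤ) → ℝ → ℝ := fun k l x =>
    ∑ i, (k i : ℝ) * (w x + g (w x)) i +
      ∑ j, (l j : ℝ) * ((β j + ∑ i, w x i * M i j) + G (w x) j)
  have hF : ∀ k l, ∀ x ∈ Set.Icc (-σ) σ,
      F k l x = A k l * (1 + x) + B l + ∑ j, (l j : ℝ) * V x j := by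
    intro k l x hx
    simp only [F, A, B, hw x hx, add_assoc, hwG x hx]
    simp only [Pi.smul_apply, smul_eq_mul]
    rw [add_mul, Finset.sum_mul, Finset.sum_mul, add_assoc,
      ← Finset.sum_add_distrib, ← Finset.sum_add_distrib]
    congr 1
    · exact Finset.sum_congr rfl fun i _ => by ring
    · exact Finset.sum_congr rfl fun j _ => by ring
  have hAB : ∀ k l, ∑ i, (k i : ℝ) * ω₀ i + ∑ j, (l j : ℝ) * (β j + ∑ i, ω₀ i * M i j)
      = A k l + B l := by
    intro k l
    simp only [A, B, mul_add, Finset.sum_add_distrib]; ring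
  have hCσ : 2 * ((m + 1) * σ) ≤ C * σ := by
    have : 0 ≤ (m + 1) * σ * ‖ω₀‖ := by positivity
    rw [hCdef]; linarith
  have h0 : ∀ k l, (∑ j, |l j|) ≤ 2 → ∀ x ∈ Set.Icc (-σ) σ,
      |F k l x - (A k l * (1 + x) + B l)| ≤ C * σ := by
    intro k l hl x hx
    rw [hF k l x hx, add_sub_cancel_left]
    have := abs_sum_int_mul_le hl (V x)
    linarith [hV0 x hx]
  have h1 : ∀ k l, (∑ j, |l j|) ≤ 2 → ∀ x ∈ Set.Icc (-σ) σ, ∀ y ∈ Set.Icc (-σ) σ,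
      |F k l x - F k l y - (x - y) * A k l| ≤ C * σ * |x - y| := by
    intro k l hl x hx y hy
    have e : F k l x - F k l y - (x - y) * A k l = ∑ j, (l j : ℝ) * (V x - V y) j := by
      rw [hF k l x hx, hF k l y hy]
      simp only [Pi.sub_apply, mul_sub, Finset.sum_sub_distrib]
      ring
    rw [e]
    have h2 := abs_sum_int_mul_le hl (V x - V y)
    have h3 : 0 ≤ (m + 1) * σ * |x - y| := by positivity
    have h4 := hV1 x hx y hy
    rw [hCdef]
    linarith
  let bad : (Fin n → ℤ) → (Fin nb → ℤ) → Set ℝ := fun k l =>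
    {x ∈ Set.Icc (-σ) σ | k ≠ 0 ∧ |F k l x| < α / 4 / (∑ i, |(k i : ℝ)|) ^ (2 * τ + 1)}
  have hτpos : ∀ k : Fin n → ℤ, k ≠ 0 → 0 < τ := by
    intro k hk
    obtain ⟨i, -⟩ := Function.ne_iff.mp hk
    have : (1 : ℝ) ≤ n := by exact_mod_cast i.pos
    linarith
  have hbad : ∀ k, ∀ l ∈ Ls, volume (bad k l) ≤ ENNReal.ofReal (D * σ * t σ k) := by
    intro k l hl
    by_cases hk : k = 0
    · have : bad k l = ∅ := by simp [bad, hk]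
      rw [this]; simp
    · obtain ⟨hl1, hl2⟩ := (hmemL l).1 hl
      have hd := hdio.1 k hk l hl2
      rw [hAB] at hd
      refine (measure_mono ?_).trans (volume_resonance_le hα hα1 (hτpos k hk) hb (hbB l hl)
        (abs_sum_int_mul_le hl2 β) hC0.le hc0 hcα (l1_one_le hk) hd hσ hs1 hsb hscb
        (h0 k l hl2) (h1 k l hl2))
      exact fun x hx => ⟨hx.1, hx.2.2⟩
  let U : Set ℝ := ⋃ k, ⋃ l ∈ Ls, bad k l
  have hterm : ∀ k, 0 ≤ (Ls.card : ℝ) * (D * σ * t σ k) := fun k => by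
    have := ht0 σ k; positivity
  have hU : volume U ≤ ENNReal.ofReal (err σ) := by
    simp only [err]
    rw [ENNReal.ofReal_tsum_of_nonneg hterm (((htsum σ).mul_left _).mul_left _)]
    refine (measure_iUnion_le _).trans (ENNReal.tsum_le_tsum fun k => ?_)
    refine (measure_biUnion_finset_le _ _).trans ?_
    refine (Finset.sum_le_card_nsmul _ _ _ (hbad k)).trans ?_
    rw [ENNReal.ofReal_mul (Nat.cast_nonneg _), ENNReal.ofReal_natCast, nsmul_eq_mul]
  refine ⟨Set.Icc (-σ) σ \ U, Set.sdiff_subset, ?_, ?_, ?_⟩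
  · by_contra hne
    rw [Set.not_nonempty_iff_eq_empty, Set.sdiff_eq_empty] at hne
    have h2 := (measure_mono hne).trans hU
    rw [Real.volume_Icc] at h2
    rw [div_lt_one hσ] at hserr
    have h3 := ENNReal.ofReal_le_ofReal_iff'.1 h2
    rcases h3 with h3 | h3 <;> linarith
  · refine (measure_mono ?_).trans hU
    rw [Set.sdiff_sdiff_right_self]
    exact Set.inter_subset_right
  · rintro x ⟨hx, hxU⟩
    have hx1 : |x| ≤ σ := abs_le.mpr hx
    have hxl := (abs_le.mp hx1).1
    refine ⟨w x, hball (hwB x hx), hw x hx, ?_, ?_⟩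
    · intro k hk l hl
      have hτ0 := hτpos k hk
      by_cases hl0 : l = 0
      · -- for `l = 0` the divisor is rescaled by `1 + x`
        have hd := hdio.1 k hk l hl
        rw [hAB] at hd
        have hB0 : B l = 0 := by simp [B, hl0]
        have hFx : F k l x = A k l * (1 + x) := by rw [hF k l x hx, hB0]; simp [hl0]
        change _ ≤ |F k l x|
        rw [hB0, add_zero] at hd
        rw [hFx]
        exact rescaled_divisor_ge hα hτ0 (l1_one_le hk) hd (by linarith)
      · have hlL : l ∈ Ls := by
          refine (hmemL l).2 ⟨?_, hl⟩
          obtain ⟨j, hj⟩ := Function.ne_iff.mp hl0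
          exact (Int.one_le_abs hj).trans (Finset.single_le_sum (f := fun j => |l j|)
            (fun _ _ => abs_nonneg _) (Finset.mem_univ j))
        by_contra hlt
        push Not at hlt
        exact hxU (Set.mem_iUnion.2 ⟨k, Set.mem_iUnion₂.2 ⟨l, hlL, hx, hk, hlt⟩⟩)
    · intro l hl1 hl2
      have hd := hdio.2 l hl1 hl2
      have e := hAB 0 l
      simp only [Pi.zero_apply, Int.cast_zero, zero_mul, Finset.sum_const_zero, zero_add] at e
      simp only [] at hd ⊢
      rw [e] at hd
      have hFe : ∑ j, (l j : ℝ) * ((β j + ∑ i, w x i * M i j) + G (w x) j) = F 0 l x := by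
        simp [F]
      rw [hFe]
      have hA : |A 0 l| ≤ 2 * (m * ‖ω₀‖) := by
        have h2 := abs_sum_int_mul_le hl2 (fun j => ∑ i, ω₀ i * M i j)
        have h3 := norm_vecMul_le M ω₀
        simp only [A, Pi.zero_apply, Int.cast_zero, zero_mul, Finset.sum_const_zero, zero_add]
        linarith
      have hxA : |x * A 0 l| ≤ C * σ := by
        rw [abs_mul]
        have h2 : |x| * |A 0 l| ≤ σ * (2 * (m * ‖ω₀‖)) := by gcongr
        have h3 : 0 ≤ m * σ := by positivity
        have h4 : 0 ≤ σ * ‖ω₀‖ := by positivity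
        have h5 : 0 ≤ m * σ * ‖ω₀‖ := by positivity
        rw [hCdef]; linarith
      have h2 := h0 0 l hl2 x hx
      have e2 : A 0 l + B l = F 0 l x + (-(F 0 l x - (A 0 l * (1 + x) + B l)) + -(x * A 0 l)) := by
        ring
      have h3 := abs_add_three (F 0 l x) (-(F 0 l x - (A 0 l * (1 + x) + B l))) (-(x * A 0 l))
      rw [abs_neg, abs_neg, add_assoc, ← e2] at h3
      linarith
end
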